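/- Let ρ̄ be a probability density on 𝕋^d and φ a bounded measurable function on 𝕋^{3d} with M_p := ‖ sup_{z,z'} |φ(·,z,z')| ‖_{L^p(ρ̄ dx)} finite. If 4m > N, then (1/(2m)!) ∫_{𝕋^{dN}} ρ̄_N(X) ( N^{−2} ∑_{i,j,k=1}^N φ(x_i, x_j, x_k) )^{2m} dX ≤ ( 3e^2 sup_{p ≥ 1} M_p / p )^{2m}. -/

import Mathlib

open MeasureTheory

/-- The `d`-dimensional torus `𝕋^d = [0,1]^d`. -/
abbrev Torus (d : ℕ) := Fin d → AddCircle (1 : ℝ)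

/-- `M_p = ‖ sup_{z,z'} |φ(·,z,z')| ‖_{L^p(ρ̄ dx)}`. -/
noncomputable def Mp {d : ℕ} (ρ : Torus d → ℝ) (φ : Torus d → Torus d → Torus d → ℝ)
    (p : ℝ) : ℝ :=
  (∫ x : Torus d, (⨆ z, ⨆ z', |φ x z z'|) ^ p * ρ x) ^ (1 / p)

/-- `sup_{p ≥ 1} M_p / p`. -/
noncomputable def Msup {d : ℕ} (ρ : Torus d → ℝ)
    (φ : Torus d → Torus d → Torus d → ℝ) : ℝ :=
  ⨆ p : {p : ℝ // 1 ≤ p}, Mp ρ φ (p : ℝ) / (p : ℝ)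

/-
Averaging over `j, k` bounds the interaction by `∑ i, G (x_i)`, where `G` is the envelope of `φ`.
The multinomial theorem and Fubini express the `n`-th moment of this sum over independent points
through the moments `∫ G ^ a`, which are at most `a ^ a S ^ a ≤ a! (e S) ^ a` for
`S = sup_{p ≥ 1} ‖G‖_p / p`. The factorials cancel the multinomial coefficient, so each of the
`(N + n - 1).choose n ≤ (3 * n).choose n ≤ (3 e) ^ n` exponent vectors contributes at most
`n! (e S) ^ n`.

The envelope, a supremum over uncountably many points, need not be Borel. Its superlevel sets are
projections of Borel sets, hence analytic, and analytic sets are null-measurable because they are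
exhausted in measure from inside by compact sets.
-/

open Set Filter
open scoped ENNReal NNReal Topology

section AnalyticSets

/-- The sequences whose first `k` entries are bounded by those of `b`. As `k` grows these sets
decrease to the compact box `Set.Icc 0 b`; their images exhaust an analytic set in measure. -/
def truncatedBox (b : ℕ → ℕ) (k : ℕ) : Set (ℕ → ℕ) := {s | ∀ i < k, s i ≤ b i}

lemma truncatedBox_zero (b : ℕ → ℕ) : truncatedBox b 0 = univ := by
  simp [truncatedBox]

lemma truncatedBox_succ (b : ℕ → ℕ) (k : ℕ) :
    truncatedBox b (k + 1) = truncatedBox b k ∩ {s | s k ≤ b k} :=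
  Set.ext fun _ => Nat.forall_lt_succ_right

lemma exists_truncatedBox_subset {b : ℕ → ℕ} {V : Set (ℕ → ℕ)} (hV : IsOpen V)
    (hb : Icc 0 b ⊆ V) : ∃ k, truncatedBox b k ⊆ V := by
  by_contra! h
  choose s hs hsV using fun k => not_subset.1 (h k)
  obtain ⟨t, ht, g, hg, hlim⟩ := (isCompact_Icc (a := 0) (b := b)).tendsto_subseq
    (x := fun k => s k ⊓ b) fun k => ⟨bot_le, inf_le_right⟩
  have hst : Tendsto (s ∘ g) atTop (𝓝 t) := by
    rw [tendsto_pi_nhds] at hlim ⊢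
    refine fun i => (hlim i).congr' ?_
    filter_upwards [eventually_gt_atTop i] with j hj
    exact inf_of_le_left (hs (g j) i (hj.trans_le (hg.id_le j)))
  obtain ⟨j, hj⟩ := (hst.eventually (hV.mem_nhds (hb ht))).exists
  exact hsV _ hj

variable {α : Type*} [MeasurableSpace α]

lemma exists_lt_measure_image_inter_apply_le (μ : Measure α) (f : (ℕ → ℕ) → α)
    {B : Set (ℕ → ℕ)} {c : ℝ≥0∞} (hc : c < μ (f '' B)) (k : ℕ) :
    ∃ j, c < μ (f '' (B ∩ {s | s k ≤ j})) := by
  have hcover : ⋃ j, B ∩ {s | s k ≤ j} = B := by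
    rw [← inter_iUnion, inter_eq_left]
    exact fun s _ => mem_iUnion.2 ⟨s k, le_refl (s k)⟩
  have hmono : Monotone fun j => f '' (B ∩ {s | s k ≤ j}) := fun i j hij =>
    image_mono (inter_subset_inter_right B fun _ (hs : _ ≤ i) => hs.trans hij)
  rw [← hcover, image_iUnion, hmono.measure_iUnion] at hc
  exact lt_iSup_iff.1 hc

lemma exists_forall_lt_measure_image_truncatedBox (μ : Measure α) (f : (ℕ → ℕ) → α)
    {c : ℝ≥0∞} (hc : c < μ (range f)) : ∃ b, ∀ k, c < μ (f '' truncatedBox b k) := by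
  choose j hj using fun (k : ℕ) (B : {B : Set (ℕ → ℕ) // c < μ (f '' B)}) =>
    exists_lt_measure_image_inter_apply_le μ f B.2 k
  let B : ℕ → {B : Set (ℕ → ℕ) // c < μ (f '' B)} := fun k =>
    Nat.rec ⟨univ, by rwa [image_univ]⟩ (fun k B => ⟨B.1 ∩ {s | s k ≤ j k B}, hj k B⟩) k
  let b : ℕ → ℕ := fun k => j k (B k)
  have hB : ∀ k, truncatedBox b k = (B k).1 := by
    intro k
    induction k with
    | zero => exact truncatedBox_zero b
    | succ k ih => rw [truncatedBox_succ, ih]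
  exact ⟨b, fun k => hB k ▸ (B k).2⟩

variable [TopologicalSpace α]

lemma exists_isCompact_subset_range_le_measure {f : (ℕ → ℕ) → α} (hf : Continuous f)
    (μ : Measure α) [μ.OuterRegular] {c : ℝ≥0∞} (hc : c < μ (range f)) :
    ∃ K ⊆ range f, IsCompact K ∧ c ≤ μ K := by
  obtain ⟨b, hb⟩ := exists_forall_lt_measure_image_truncatedBox μ f hc
  refine ⟨f '' Icc 0 b, image_subset_range _ _, isCompact_Icc.image hf, ?_⟩
  rw [measure_eq_iInf_isOpen]
  refine le_iInf₂ fun U hU => le_iInf fun hUo => ?_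
  obtain ⟨k, hk⟩ := exists_truncatedBox_subset (hUo.preimage hf) (image_subset_iff.1 hU)
  exact (hb k).le.trans (measure_mono (image_subset_iff.2 hk))

lemma nullMeasurableSet_of_analyticSet [T2Space α] [OpensMeasurableSpace α] (μ : Measure α)
    [IsFiniteMeasure μ] [μ.OuterRegular] {A : Set α} (hA : AnalyticSet A) :
    NullMeasurableSet A μ := by
  rw [AnalyticSet] at hA
  obtain rfl | ⟨f, hf, rfl⟩ := hA
  · exact nullMeasurableSet_empty
  rcases eq_or_ne (μ (range f)) 0 with h0 | h0
  · exact NullMeasurableSet.of_null h0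
  obtain ⟨u, -, hu, hlim⟩ := exists_seq_strictMono_tendsto' (pos_iff_ne_zero.2 h0)
  choose K hKf hKc hK using fun i => exists_isCompact_subset_range_le_measure hf μ (hu i).2
  have hmeas : NullMeasurableSet (⋃ i, K i) μ :=
    (MeasurableSet.iUnion fun i => (hKc i).measurableSet).nullMeasurableSet
  have hle : μ (range f) ≤ μ (⋃ i, K i) :=
    le_of_tendsto' hlim fun i => (hK i).trans (measure_mono (subset_iUnion K i))
  exact hmeas.congr (ae_eq_of_subset_of_measure_ge (iUnion_subset hKf) hle hmeas
    (measure_ne_top μ _))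

end AnalyticSets

section Suprema

variable {α β γ : Type*} [MeasurableSpace α] [StandardBorelSpace α]
  [MeasurableSpace β] [StandardBorelSpace β]

lemma nullMeasurableSet_image_fst (μ : Measure α) [IsFiniteMeasure μ] {s : Set (α × β)}
    (hs : MeasurableSet s) : NullMeasurableSet (Prod.fst '' s) μ := by
  let _ := upgradeStandardBorel α
  exact nullMeasurableSet_of_analyticSet μ (hs.analyticSet_image measurable_fst)

lemma aemeasurable_iSup_of_uncurry [CompleteLinearOrder γ] [TopologicalSpace γ]
    [OrderTopology γ] [SecondCountableTopology γ] [MeasurableSpace γ] [BorelSpace γ]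
    (μ : Measure α) [IsFiniteMeasure μ] {f : α → β → γ}
    (hf : Measurable (Function.uncurry f)) : AEMeasurable (fun x => ⨆ y, f x y) μ := by
  have hproj (a : γ) : (fun x => ⨆ y, f x y) ⁻¹' Ioi a =
      Prod.fst '' (Function.uncurry f ⁻¹' Ioi a) := by
    ext x
    simp [lt_iSup_iff]
  refine NullMeasurable.aemeasurable (measurable_of_Ioi fun a => ?_)
  exact (hproj a).symm ▸ nullMeasurableSet_image_fst μ (hf measurableSet_Ioi)

end Suprema

section ProductMeasures

lemma lintegral_fin_prod_eq_prod {n : ℕ} {E : Fin n → Type*} [∀ i, MeasurableSpace (E i)]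
    (μ : ∀ i, Measure (E i)) [∀ i, SigmaFinite (μ i)] {f : ∀ i, E i → ℝ≥0∞}
    (hf : ∀ i, AEMeasurable (f i) (μ i)) :
    ∫⁻ x, ∏ i, f i (x i) ∂Measure.pi μ = ∏ i, ∫⁻ x, f i x ∂μ i := by
  induction n with
  | zero => simp
  | succ n ih =>
    have htail : AEMeasurable (fun y : ∀ i : Fin n, E i.succ => ∏ i : Fin n, f i.succ (y i))
        (Measure.pi fun i => μ i.succ) :=
      Finset.aemeasurable_fun_prod _ fun i _ =>
        (hf i.succ).comp_quasiMeasurePreserving (Measure.quasiMeasurePreserving_eval _ i)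
    rw [Fin.prod_univ_succ, ← ih (fun i => μ i.succ) fun i => hf i.succ,
      ← lintegral_prod_mul (hf 0) htail,
      ← (measurePreserving_piFinSuccAbove μ 0).symm.lintegral_comp_emb
        (MeasurableEquiv.measurableEmbedding _)]
    simp only [Fin.prod_univ_succ]
    rfl

variable {ι : Type*} [Fintype ι]

lemma lintegral_fintype_prod_eq_prod {E : ι → Type*} [∀ i, MeasurableSpace (E i)]
    (μ : ∀ i, Measure (E i)) [∀ i, SigmaFinite (μ i)] {f : ∀ i, E i → ℝ≥0∞}
    (hf : ∀ i, AEMeasurable (f i) (μ i)) :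
    ∫⁻ x, ∏ i, f i (x i) ∂Measure.pi μ = ∏ i, ∫⁻ x, f i x ∂μ i := by
  let e := (Fintype.equivFin ι).symm
  rw [← (measurePreserving_piCongrLeft μ e).lintegral_comp_emb
    (MeasurableEquiv.measurableEmbedding _)]
  simp_rw [← e.prod_comp, MeasurableEquiv.coe_piCongrLeft, Equiv.piCongrLeft_apply_apply]
  exact lintegral_fin_prod_eq_prod _ fun i => hf (e i)

lemma pi_withDensity {E : ι → Type*} [∀ i, MeasurableSpace (E i)] (μ : ∀ i, Measure (E i))
    [∀ i, SigmaFinite (μ i)] {f : ∀ i, E i → ℝ≥0∞} (hf : ∀ i, AEMeasurable (f i) (μ i))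
    [∀ i, SigmaFinite ((μ i).withDensity (f i))] :
    Measure.pi (fun i => (μ i).withDensity (f i)) =
      (Measure.pi μ).withDensity fun x => ∏ i, f i (x i) := by
  refine Measure.pi_eq fun s hs => ?_
  rw [withDensity_apply _ (MeasurableSet.univ_pi hs), Measure.restrict_pi_pi,
    lintegral_fintype_prod_eq_prod (fun i => (μ i).restrict (s i)) fun i => (hf i).restrict]
  exact Finset.prod_congr rfl fun i _ => (withDensity_apply _ (hs i)).symm

lemma lintegral_sum_pow_pi {E : Type*} [MeasurableSpace E] [DecidableEq ι] (μ : Measure E)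
    [SigmaFinite μ] {f : E → ℝ≥0∞} (hf : AEMeasurable f μ) (n : ℕ) :
    ∫⁻ X : ι → E, (∑ i, f (X i)) ^ n ∂Measure.pi (fun _ => μ) =
      ∑ k ∈ Finset.piAntidiag (Finset.univ : Finset ι) n,
        Nat.multinomial Finset.univ k * ∏ i, ∫⁻ x, f x ^ k i ∂μ := by
  have hmeas (k : ι → ℕ) :
      AEMeasurable (fun X : ι → E => ∏ i, f (X i) ^ k i) (Measure.pi fun _ => μ) :=
    Finset.aemeasurable_fun_prod _ fun i _ =>
      (hf.comp_quasiMeasurePreserving (Measure.quasiMeasurePreserving_eval _ i)).pow_const (k i)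
  simp_rw [Finset.sum_pow_eq_sum_piAntidiag]
  rw [lintegral_finsetSum' _ fun k _ => (hmeas k).const_mul _]
  refine Finset.sum_congr rfl fun k _ => ?_
  rw [lintegral_const_mul'' _ (hmeas k),
    lintegral_fintype_prod_eq_prod (fun _ : ι => μ) fun i => hf.pow_const (k i)]

end ProductMeasures

section Counting

lemma card_piAntidiag_univ (ι : Type*) [Fintype ι] [DecidableEq ι] (n : ℕ) :
    (Finset.piAntidiag (Finset.univ : Finset ι) n).card = (Fintype.card ι + n - 1).choose n := by
  rw [← Finset.map_sym_eq_piAntidiag, Finset.card_map, Finset.sym_univ, Finset.card_univ,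
    Sym.card_sym_eq_choose]

lemma pow_self_le_factorial_mul_exp_pow (n : ℕ) : (n : ℝ) ^ n ≤ n.factorial * Real.exp 1 ^ n := by
  have h := Real.pow_div_factorial_le_exp (n : ℝ) n.cast_nonneg n
  rwa [div_le_iff₀' (by positivity), ← mul_one (n : ℝ), Real.exp_nat_mul, mul_one] at h

lemma choose_mul_le_mul_exp_pow (k n : ℕ) :
    ((k * n).choose n : ℝ) ≤ (k * Real.exp 1) ^ n := by
  calc ((k * n).choose n : ℝ) ≤ ((k * n : ℕ) : ℝ) ^ n / n.factorial :=
        Nat.choose_le_pow_div n (k * n)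
    _ = k ^ n * (n ^ n / n.factorial) := by push_cast; ring
    _ ≤ k ^ n * Real.exp 1 ^ n := by
      gcongr
      exact div_le_of_le_mul₀ (by positivity) (by positivity)
        ((pow_self_le_factorial_mul_exp_pow n).trans_eq (mul_comm _ _))
    _ = (k * Real.exp 1) ^ n := (mul_pow _ _ _).symm

end Counting

section MomentGrowth

variable {E : Type*} [MeasurableSpace E]

/-- The growth rate `sup_{p ≥ 1} ‖f‖_{L^p(μ)} / p` of the moments of `f`, finite when `f` is
subexponential. -/
noncomputable def lpGrowth {ε : Type*} [ENorm ε] (f : E → ε) (μ : Measure E) : ℝ≥0∞ :=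
  ⨆ (p : ℝ≥0) (_ : 1 ≤ p), eLpNorm f p μ / p

lemma lintegral_enorm_pow_le_lpGrowth {ε : Type*} [ENorm ε] (f : E → ε) (μ : Measure E)
    [IsProbabilityMeasure μ] (a : ℕ) :
    ∫⁻ x, ‖f x‖ₑ ^ a ∂μ ≤ a.factorial * (ENNReal.ofReal (Real.exp 1) * lpGrowth f μ) ^ a := by
  rcases Nat.eq_zero_or_pos a with rfl | ha
  · simp
  have hnorm : eLpNorm f a μ ≤ a * lpGrowth f μ := by
    rw [mul_comm, ← ENNReal.div_le_iff (mod_cast ha.ne') (ENNReal.natCast_ne_top a)]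
    exact le_iSup₂_of_le (a : ℝ≥0) (mod_cast ha) le_rfl
  have hmoment : ∫⁻ x, ‖f x‖ₑ ^ a ∂μ = eLpNorm f a μ ^ a := by
    simpa using (eLpNorm_nnreal_pow_eq_lintegral (f := f) (μ := μ)
      (p := a) (mod_cast ha.ne')).symm
  have hstirling : (a : ℝ≥0∞) ^ a ≤ a.factorial * ENNReal.ofReal (Real.exp 1) ^ a := by
    have h := ENNReal.ofReal_le_ofReal (pow_self_le_factorial_mul_exp_pow a)
    rwa [ENNReal.ofReal_mul (by positivity), ENNReal.ofReal_pow (by positivity),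
      ENNReal.ofReal_pow (by positivity), ENNReal.ofReal_natCast, ENNReal.ofReal_natCast] at h
  calc ∫⁻ x, ‖f x‖ₑ ^ a ∂μ ≤ (a * lpGrowth f μ) ^ a := by rw [hmoment]; gcongr
    _ = a ^ a * lpGrowth f μ ^ a := mul_pow _ _ _
    _ ≤ a.factorial * ENNReal.ofReal (Real.exp 1) ^ a * lpGrowth f μ ^ a := by gcongr
    _ = a.factorial * (ENNReal.ofReal (Real.exp 1) * lpGrowth f μ) ^ a := by rw [mul_pow, mul_assoc]

lemma lintegral_sum_pow_pi_le_of_moments_le {ι : Type*} [Fintype ι] (μ : Measure E)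
    [SigmaFinite μ] {f : E → ℝ≥0∞} (hf : AEMeasurable f μ) {s : ℝ≥0∞}
    (hs : ∀ a : ℕ, ∫⁻ x, f x ^ a ∂μ ≤ a.factorial * s ^ a) (n : ℕ) :
    ∫⁻ X : ι → E, (∑ i, f (X i)) ^ n ∂Measure.pi (fun _ => μ) ≤
      n.factorial * ((Fintype.card ι + n - 1).choose n * s ^ n) := by
  classical
  have hterm : ∀ k ∈ Finset.piAntidiag (Finset.univ : Finset ι) n,
      Nat.multinomial Finset.univ k * ∏ i, ∫⁻ x, f x ^ k i ∂μ ≤ n.factorial * s ^ n := by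
    intro k hk
    have hsum : ∑ i, k i = n := (Finset.mem_piAntidiag.1 hk).1
    calc (Nat.multinomial Finset.univ k : ℝ≥0∞) * ∏ i, ∫⁻ x, f x ^ k i ∂μ
        ≤ Nat.multinomial Finset.univ k * ∏ i, ((k i).factorial * s ^ k i) := by
          gcongr with i
          exact hs (k i)
      _ = ((∏ i, (k i).factorial) * Nat.multinomial Finset.univ k : ℕ) * s ^ ∑ i, k i := by
          rw [Finset.prod_mul_distrib, Finset.prod_pow_eq_pow_sum]
          push_cast
          ring
      _ = n.factorial * s ^ n := by rw [Nat.multinomial_spec, hsum]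
  calc _ = ∑ k ∈ Finset.piAntidiag (Finset.univ : Finset ι) n,
        Nat.multinomial Finset.univ k * ∏ i, ∫⁻ x, f x ^ k i ∂μ := lintegral_sum_pow_pi μ hf n
    _ ≤ (Finset.piAntidiag (Finset.univ : Finset ι) n).card • (n.factorial * s ^ n) :=
        Finset.sum_le_card_nsmul _ _ _ hterm
    _ = n.factorial * ((Fintype.card ι + n - 1).choose n * s ^ n) := by
        rw [card_piAntidiag_univ, nsmul_eq_mul, mul_left_comm]

end MomentGrowth

section TripleSums

variable {E F : Type*} [NormedAddCommGroup F]

/-- The envelope `sup_{z,z'} ‖φ(x,z,z')‖` of a three-body kernel, whose `L^p` norms are the `M_p`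
of the paper. Its values lie in `[0, ∞]`, where an unbounded supremum is `∞` rather than `0`. -/
noncomputable def envelope (φ : E → E → E → F) (x : E) : ℝ≥0∞ :=
  ⨆ z, ⨆ z', ‖φ x z z'‖ₑ

/-- The three-body interaction `N^{-2} ∑_{i,j,k} φ(x_i,x_j,x_k)` of `N` particles. -/
noncomputable def tripleInteraction [NormedSpace ℝ F] (φ : E → E → E → F) {N : ℕ}
    (X : Fin N → E) : F :=
  (1 / (N : ℝ) ^ 2) • ∑ i, ∑ j, ∑ k, φ (X i) (X j) (X k)

lemma enorm_le_envelope (φ : E → E → E → F) (x z z' : E) : ‖φ x z z'‖ₑ ≤ envelope φ x :=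
  le_iSup₂ (f := fun z z' => ‖φ x z z'‖ₑ) z z'

lemma aemeasurable_envelope [MeasurableSpace E] [StandardBorelSpace E] [MeasurableSpace F]
    [OpensMeasurableSpace F] (μ : Measure E) [IsFiniteMeasure μ] {φ : E → E → E → F}
    (hφ : Measurable fun q : E × E × E => φ q.1 q.2.1 q.2.2) :
    AEMeasurable (envelope φ) μ := by
  exact (aemeasurable_iSup_of_uncurry μ (f := fun x (q : E × E) => ‖φ x q.1 q.2‖ₑ)
    hφ.enorm).congr (.of_forall fun _ => iSup_prod)

lemma enorm_tripleInteraction_le [NormedSpace ℝ F] (φ : E → E → E → F) {N : ℕ}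
    (X : Fin N → E) : ‖tripleInteraction φ X‖ₑ ≤ ∑ i, envelope φ (X i) := by
  have hscale : ‖1 / (N : ℝ) ^ 2‖ₑ * (N : ℝ≥0∞) ^ 2 ≤ 1 := by
    have hcast : (N : ℝ≥0∞) ^ 2 = ‖(N : ℝ) ^ 2‖ₑ := by
      simp [enorm_pow]
    rw [hcast, ← enorm_mul]
    rcases eq_or_ne ((N : ℝ) ^ 2) 0 with h | h <;> simp [h]
  have hsum : ‖∑ i, ∑ j, ∑ k, φ (X i) (X j) (X k)‖ₑ ≤
      (N : ℝ≥0∞) ^ 2 * ∑ i, envelope φ (X i) := calc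
    _ ≤ ∑ i, ∑ _j : Fin N, ∑ _k : Fin N, envelope φ (X i) :=
      (enorm_sum_le _ _).trans <| Finset.sum_le_sum fun i _ =>
        (enorm_sum_le _ _).trans <| Finset.sum_le_sum fun j _ =>
          (enorm_sum_le _ _).trans <| Finset.sum_le_sum fun k _ => enorm_le_envelope φ _ _ _
    _ = (N : ℝ≥0∞) ^ 2 * ∑ i, envelope φ (X i) := by
      simp only [Finset.sum_const, Finset.card_univ, Fintype.card_fin, nsmul_eq_mul,
        ← Finset.mul_sum, sq, mul_assoc]
  calc ‖tripleInteraction φ X‖ₑ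
      = ‖1 / (N : ℝ) ^ 2‖ₑ * ‖∑ i, ∑ j, ∑ k, φ (X i) (X j) (X k)‖ₑ := enorm_smul _ _
    _ ≤ ‖1 / (N : ℝ) ^ 2‖ₑ * (N : ℝ≥0∞) ^ 2 * ∑ i, envelope φ (X i) := by
      rw [mul_assoc]
      gcongr
    _ ≤ ∑ i, envelope φ (X i) := mul_le_of_le_one_left' hscale

end TripleSums

section Densities

variable {E : Type*} [MeasurableSpace E] {μ : Measure E} {ρ : E → ℝ}

lemma isProbabilityMeasure_withDensity_ofReal (hρ0 : ∀ x, 0 ≤ ρ x) (hρ1 : ∫ x, ρ x ∂μ = 1) :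
    IsProbabilityMeasure (μ.withDensity fun x => ENNReal.ofReal (ρ x)) := by
  have hint : Integrable ρ μ := .of_integral_ne_zero (by simp [hρ1])
  constructor
  rw [withDensity_apply _ .univ, Measure.restrict_univ,
    ← ofReal_integral_eq_lintegral_ofReal hint (.of_forall hρ0), hρ1, ENNReal.ofReal_one]

lemma integral_withDensity_ofReal (hρm : Measurable ρ) (hρ0 : ∀ x, 0 ≤ ρ x) (f : E → ℝ) :
    ∫ x, f x ∂μ.withDensity (fun x => ENNReal.ofReal (ρ x)) = ∫ x, f x * ρ x ∂μ := by
  rw [integral_withDensity_eq_integral_toReal_smul hρm.ennreal_ofReal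
    (.of_forall fun _ => ENNReal.ofReal_lt_top)]
  simp only [ENNReal.toReal_ofReal (hρ0 _), smul_eq_mul, mul_comm]

lemma integral_pi_withDensity_ofReal {ι : Type*} [Fintype ι] [SigmaFinite μ]
    (hρm : Measurable ρ) (hρ0 : ∀ x, 0 ≤ ρ x) (f : (ι → E) → ℝ) :
    ∫ X, f X ∂Measure.pi (fun _ => μ.withDensity fun x => ENNReal.ofReal (ρ x)) =
      ∫ X, f X * ∏ i, ρ (X i) ∂Measure.pi fun _ => μ := by
  rw [pi_withDensity (fun _ => μ) fun _ => hρm.ennreal_ofReal.aemeasurable]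
  simp only [← ENNReal.ofReal_prod_of_nonneg fun _ _ => hρ0 _]
  exact integral_withDensity_ofReal
    (Finset.measurable_fun_prod _ fun i _ => hρm.comp (measurable_pi_apply i))
    (fun X => Finset.prod_nonneg fun i _ => hρ0 (X i)) f

lemma inv_factorial_mul_integral_pow_le {f : E → ℝ} {n : ℕ} {K : ℝ≥0∞} {c : ℝ} (hc : 0 ≤ c)
    (hK : K ≤ ENNReal.ofReal c) (hf : ∫⁻ x, ‖f x‖ₑ ^ n ∂μ ≤ n.factorial * K ^ n) :
    (n.factorial : ℝ)⁻¹ * ∫ x, f x ^ n ∂μ ≤ c ^ n := by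
  have hbound : ‖∫ x, f x ^ n ∂μ‖ₑ ≤ ENNReal.ofReal (n.factorial * c ^ n) := calc
    _ ≤ ∫⁻ x, ‖f x‖ₑ ^ n ∂μ := by
      simpa only [enorm_pow] using enorm_integral_le_lintegral_enorm (μ := μ) fun x => f x ^ n
    _ ≤ n.factorial * ENNReal.ofReal c ^ n := hf.trans (by gcongr)
    _ = ENNReal.ofReal (n.factorial * c ^ n) := by
      rw [ENNReal.ofReal_mul (by positivity), ENNReal.ofReal_natCast, ENNReal.ofReal_pow hc]
  rw [inv_mul_le_iff₀ (by positivity)]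
  rw [← ofReal_norm, ENNReal.ofReal_le_ofReal_iff (by positivity)] at hbound
  exact (Real.le_norm_self _).trans hbound

end Densities

section BoundedKernels

variable {E : Type*} {φ : E → E → E → ℝ} {C : ℝ}

lemma envelope_le_ofReal (hC : ∀ x z z', |φ x z z'| ≤ C) (x : E) :
    envelope φ x ≤ ENNReal.ofReal C :=
  iSup₂_le fun z z' => by
    simpa only [Real.enorm_eq_ofReal_abs] using ENNReal.ofReal_le_ofReal (hC x z z')

lemma toReal_envelope (hC : ∀ x z z', |φ x z z'| ≤ C) (x : E) :
    (envelope φ x).toReal = ⨆ z, ⨆ z', |φ x z z'| := by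
  have htop (z : E) : ⨆ z', ‖φ x z z'‖ₑ ≠ ∞ :=
    ne_top_of_le_ne_top ENNReal.ofReal_ne_top
      ((le_iSup (fun z => ⨆ z', ‖φ x z z'‖ₑ) z).trans (envelope_le_ofReal hC x))
  simp only [envelope, ENNReal.toReal_iSup htop, ENNReal.toReal_iSup fun _ => enorm_ne_top,
    toReal_enorm, Real.norm_eq_abs]

lemma enorm_iSup_iSup_abs (hC : ∀ x z z', |φ x z z'| ≤ C) (x : E) :
    ‖⨆ z, ⨆ z', |φ x z z'|‖ₑ = envelope φ x := by
  rw [← toReal_envelope hC, Real.enorm_of_nonneg ENNReal.toReal_nonneg,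
    ENNReal.ofReal_toReal (ne_top_of_le_ne_top ENNReal.ofReal_ne_top (envelope_le_ofReal hC x))]

end BoundedKernels

section TorusKernels

variable {d : ℕ} {ρ : Torus d → ℝ} {φ : Torus d → Torus d → Torus d → ℝ} {C : ℝ}

lemma Mp_nonneg (hρ0 : ∀ x, 0 ≤ ρ x) (p : ℝ) : 0 ≤ Mp ρ φ p :=
  Real.rpow_nonneg (integral_nonneg fun x => mul_nonneg (Real.rpow_nonneg
    (Real.iSup_nonneg fun _ => Real.iSup_nonneg fun _ => abs_nonneg _) p) (hρ0 x)) _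

lemma Msup_nonneg (hρ0 : ∀ x, 0 ≤ ρ x) : 0 ≤ Msup ρ φ :=
  Real.iSup_nonneg fun p => div_nonneg (Mp_nonneg hρ0 p) (zero_le_one.trans p.2)

lemma eLpNorm_envelope_eq_ofReal_Mp (hρm : Measurable ρ) (hρ0 : ∀ x, 0 ≤ ρ x)
    (hρ1 : ∫ x, ρ x = 1)
    (hφ : Measurable fun q : Torus d × Torus d × Torus d => φ q.1 q.2.1 q.2.2)
    (hC : ∀ x z z', |φ x z z'| ≤ C) {p : ℝ≥0} (hp : p ≠ 0) :
    eLpNorm (envelope φ) p (volume.withDensity fun x => ENNReal.ofReal (ρ x)) =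
      ENNReal.ofReal (Mp ρ φ p) := by
  have := isProbabilityMeasure_withDensity_ofReal hρ0 hρ1
  have hLp : MemLp (fun x => ⨆ z, ⨆ z', |φ x z z'|) p
      (volume.withDensity fun x => ENNReal.ofReal (ρ x)) := by
    simp only [← toReal_envelope hC]
    exact .of_enorm_bound (aemeasurable_envelope _ hφ).ennreal_toReal.aestronglyMeasurable
      ENNReal.ofReal_ne_top (.of_forall fun x => by
        rw [toReal_envelope hC, enorm_iSup_iSup_abs hC]
        exact envelope_le_ofReal hC x)
  calc _ = eLpNorm (fun x => ⨆ z, ⨆ z', |φ x z z'|) p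
          (volume.withDensity fun x => ENNReal.ofReal (ρ x)) :=
        eLpNorm_congr_enorm_ae (.of_forall fun x => (enorm_iSup_iSup_abs hC x).symm)
    _ = ENNReal.ofReal (Mp ρ φ p) := by
        have habs (x : Torus d) : ‖⨆ z, ⨆ z', |φ x z z'|‖ = ⨆ z, ⨆ z', |φ x z z'| :=
          Real.norm_of_nonneg (Real.iSup_nonneg fun _ => Real.iSup_nonneg fun _ => abs_nonneg _)
        rw [hLp.eLpNorm_eq_integral_rpow_norm (mod_cast hp) ENNReal.coe_ne_top,
          integral_withDensity_ofReal hρm hρ0, Mp, one_div]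
        simp only [habs, ENNReal.coe_toReal]

lemma Mp_le (hρm : Measurable ρ) (hρ0 : ∀ x, 0 ≤ ρ x) (hρ1 : ∫ x, ρ x = 1)
    (hφ : Measurable fun q : Torus d × Torus d × Torus d => φ q.1 q.2.1 q.2.2)
    (hC : ∀ x z z', |φ x z z'| ≤ C) {p : ℝ≥0} (hp : p ≠ 0) : Mp ρ φ p ≤ C := by
  have := isProbabilityMeasure_withDensity_ofReal hρ0 hρ1
  have hC0 : 0 ≤ C := (abs_nonneg _).trans (hC 0 0 0)
  rw [← ENNReal.ofReal_le_ofReal_iff hC0, ← eLpNorm_envelope_eq_ofReal_Mp hρm hρ0 hρ1 hφ hC hp]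
  simpa only [measure_univ, ENNReal.one_rpow, smul_eq_mul, mul_one] using
    eLpNorm_le_of_ae_enorm_bound (p := p)
      (μ := volume.withDensity fun x => ENNReal.ofReal (ρ x)) (f := envelope φ)
      (.of_forall (envelope_le_ofReal hC))

lemma lpGrowth_envelope_le_ofReal_Msup (hρm : Measurable ρ) (hρ0 : ∀ x, 0 ≤ ρ x)
    (hρ1 : ∫ x, ρ x = 1)
    (hφ : Measurable fun q : Torus d × Torus d × Torus d => φ q.1 q.2.1 q.2.2)
    (hC : ∀ x z z', |φ x z z'| ≤ C) :
    lpGrowth (envelope φ) (volume.withDensity fun x => ENNReal.ofReal (ρ x)) ≤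
      ENNReal.ofReal (Msup ρ φ) := by
  have hbdd : BddAbove (range fun p : {p : ℝ // 1 ≤ p} => Mp ρ φ p / p) := by
    refine ⟨C, forall_mem_range.2 fun ⟨p, hp⟩ => ?_⟩
    lift p to ℝ≥0 using zero_le_one.trans hp
    have hp0 : p ≠ 0 := (zero_lt_one.trans_le (NNReal.one_le_coe.1 hp)).ne'
    exact (div_le_self (Mp_nonneg hρ0 _) hp).trans (Mp_le hρm hρ0 hρ1 hφ hC hp0)
  refine iSup₂_le fun p hp => ?_
  have hp0 : 0 < p := zero_lt_one.trans_le hp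
  rw [eLpNorm_envelope_eq_ofReal_Mp hρm hρ0 hρ1 hφ hC hp0.ne', ← ENNReal.ofReal_coe_nnreal,
    ← ENNReal.ofReal_div_of_pos (NNReal.coe_pos.2 hp0)]
  exact ENNReal.ofReal_le_ofReal (le_ciSup hbdd ⟨p, hp⟩)

end TorusKernels

theorem stmt15_general {E F : Type*} [MeasurableSpace E] [StandardBorelSpace E]
    [NormedAddCommGroup F] [NormedSpace ℝ F] [MeasurableSpace F] [OpensMeasurableSpace F]
    (μ : Measure E) [IsProbabilityMeasure μ] {φ : E → E → E → F}
    (hφ : Measurable fun q : E × E × E => φ q.1 q.2.1 q.2.2)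
    {N n : ℕ} (hN : N ≤ 2 * n + 1) :
    ∫⁻ X : Fin N → E, ‖tripleInteraction φ X‖ₑ ^ n ∂Measure.pi (fun _ => μ) ≤
      n.factorial * (ENNReal.ofReal (3 * Real.exp 1 ^ 2) * lpGrowth (envelope φ) μ) ^ n := by
  have hmoments (a : ℕ) := lintegral_enorm_pow_le_lpGrowth (envelope φ) μ a
  simp only [enorm_eq_self] at hmoments
  have hchoose : ((N + n - 1).choose n : ℝ≥0∞) ≤ ENNReal.ofReal (3 * Real.exp 1) ^ n := by
    have h : ((N + n - 1).choose n : ℝ) ≤ (3 * Real.exp 1) ^ n :=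
      (Nat.cast_le.2 (Nat.choose_le_choose n (by omega))).trans (choose_mul_le_mul_exp_pow 3 n)
    rw [← ENNReal.ofReal_pow (by positivity), ← ENNReal.ofReal_natCast]
    exact ENNReal.ofReal_le_ofReal h
  calc _ ≤ ∫⁻ X : Fin N → E, (∑ i, envelope φ (X i)) ^ n ∂Measure.pi (fun _ => μ) := by
        gcongr with X
        exact enorm_tripleInteraction_le φ X
    _ ≤ n.factorial * ((N + n - 1).choose n *
          (ENNReal.ofReal (Real.exp 1) * lpGrowth (envelope φ) μ) ^ n) := by
        simpa only [Fintype.card_fin] using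
          lintegral_sum_pow_pi_le_of_moments_le (ι := Fin N) μ (aemeasurable_envelope μ hφ)
            hmoments n
    _ ≤ n.factorial * (ENNReal.ofReal (3 * Real.exp 1) ^ n *
          (ENNReal.ofReal (Real.exp 1) * lpGrowth (envelope φ) μ) ^ n) := by gcongr
    _ = n.factorial * (ENNReal.ofReal (3 * Real.exp 1 ^ 2) * lpGrowth (envelope φ) μ) ^ n := by
        rw [← mul_pow, ← mul_assoc, ← ENNReal.ofReal_mul (by positivity), sq, mul_assoc 3]

/-- Proposition 3.1 (large-`m` regime): if `4m > N` then
`(1/(2m)!) ∫ ρ̄^{⊗N} (N^{−2} ∑_{i,j,k} φ(x_i,x_j,x_k))^{2m} ≤ (3e² sup_{p≥1} M_p/p)^{2m}`. -/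
theorem stmt15 {d N m : ℕ} (hd : 0 < d) (hN : 0 < N) (hm : 0 < m) (h4m : N < 4 * m)
    (ρ : Torus d → ℝ) (hρmeas : Measurable ρ) (hρ0 : ∀ x, 0 ≤ ρ x)
    (hρ1 : ∫ x : Torus d, ρ x = 1)
    (φ : Torus d → Torus d → Torus d → ℝ)
    (hφmeas : Measurable fun p : Torus d × Torus d × Torus d => φ p.1 p.2.1 p.2.2)
    (C : ℝ) (hφbdd : ∀ x z z', |φ x z z'| ≤ C) :
    ((Nat.factorial (2 * m) : ℝ))⁻¹ *
        ∫ X : Fin N → Torus d,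
          ((1 / (N : ℝ) ^ 2) * ∑ i : Fin N, ∑ j : Fin N, ∑ k : Fin N,
              φ (X i) (X j) (X k)) ^ (2 * m) * ∏ s, ρ (X s)
      ≤ (3 * Real.exp 1 ^ 2 * Msup ρ φ) ^ (2 * m) := by
  have := isProbabilityMeasure_withDensity_ofReal hρ0 hρ1
  have hgrowth := lpGrowth_envelope_le_ofReal_Msup hρmeas hρ0 hρ1 hφmeas hφbdd
  have hMsup := Msup_nonneg (φ := φ) hρ0
  rw [volume_pi, ← integral_pi_withDensity_ofReal hρmeas hρ0]
  refine inv_factorial_mul_integral_pow_le (by positivity) ?_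
    (stmt15_general _ hφmeas (by omega))
  rw [ENNReal.ofReal_mul (q := Msup ρ φ) (by positivity)]
  gcongr
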